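/- arXiv:2104.04589 — 10 statements merged into one kernel-verified Lean document; each statement's English description precedes it below -/
import Mathlib

section
/- In system PRK the generalized absurdity rule is admissible: for any finite set Γ of moded propositions and any moded propositions P and Q, where P is not necessarily strong, if Γ ⊢ P and Γ ⊢ P~ are derivable then Γ ⊢ Q is derivable. -/
/-- Pure propositions: A ::= α | A∧B | A∨B | ¬A -/
inductive PureProp : Type
  | var : ℕ → PureProp
  | conj : PureProp → PureProp → PureProp
  | disj : PureProp → PureProp → PureProp
  | neg : PureProp → PureProp
  deriving DecidableEq

/-- Moded propositions: A⁺ (sp), A⁻ (sn), A⊕ (cp), A⊖ (cn). -/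
inductive MProp : Type
  | sp : PureProp → MProp
  | sn : PureProp → MProp
  | cp : PureProp → MProp
  | cn : PureProp → MProp
  deriving DecidableEq

/-- The opposite P~: flips the sign, keeps the strength. -/
def MProp.opp : MProp → MProp
  | .sp A => .sn A
  | .sn A => .sp A
  | .cp A => .cn A
  | .cn A => .cp A

def MProp.isStrong : MProp → Prop
  | .sp _ => True
  | .sn _ => True
  | .cp _ => False
  | .cn _ => False

def MProp.isClassical : MProp → Prop
  | .sp _ => False
  | .sn _ => False
  | .cp _ => True
  | .cn _ => True

/-- Derivability in system PRK (natural deduction), Γ a finite set of moded propositions. -/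
inductive PRK : Finset MProp → MProp → Prop
  | ax {Γ : Finset MProp} {P : MProp} : P ∈ Γ → PRK Γ P
  | abs {Γ : Finset MProp} {P Q : MProp} :
      P.isStrong → PRK Γ P → PRK Γ P.opp → PRK Γ Q
  | iConjP {Γ A B} : PRK Γ (MProp.cp A) → PRK Γ (MProp.cp B) → PRK Γ (MProp.sp (PureProp.conj A B))
  | eConjP1 {Γ A B} : PRK Γ (MProp.sp (PureProp.conj A B)) → PRK Γ (MProp.cp A)
  | eConjP2 {Γ A B} : PRK Γ (MProp.sp (PureProp.conj A B)) → PRK Γ (MProp.cp B)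
  | iDisjP1 {Γ A B} : PRK Γ (MProp.cp A) → PRK Γ (MProp.sp (PureProp.disj A B))
  | iDisjP2 {Γ A B} : PRK Γ (MProp.cp B) → PRK Γ (MProp.sp (PureProp.disj A B))
  | eDisjP {Γ A B P} : PRK Γ (MProp.sp (PureProp.disj A B)) →
      PRK (insert (MProp.cp A) Γ) P → PRK (insert (MProp.cp B) Γ) P → PRK Γ P
  | iNegP {Γ A} : PRK Γ (MProp.cn A) → PRK Γ (MProp.sp (PureProp.neg A))
  | eNegP {Γ A} : PRK Γ (MProp.sp (PureProp.neg A)) → PRK Γ (MProp.cn A)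
  | icP {Γ A} : PRK (insert (MProp.cn A) Γ) (MProp.sp A) → PRK Γ (MProp.cp A)
  | ecP {Γ A} : PRK Γ (MProp.cp A) → PRK Γ (MProp.cn A) → PRK Γ (MProp.sp A)
  | iDisjN {Γ A B} : PRK Γ (MProp.cn A) → PRK Γ (MProp.cn B) → PRK Γ (MProp.sn (PureProp.disj A B))
  | eDisjN1 {Γ A B} : PRK Γ (MProp.sn (PureProp.disj A B)) → PRK Γ (MProp.cn A)
  | eDisjN2 {Γ A B} : PRK Γ (MProp.sn (PureProp.disj A B)) → PRK Γ (MProp.cn B)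
  | iConjN1 {Γ A B} : PRK Γ (MProp.cn A) → PRK Γ (MProp.sn (PureProp.conj A B))
  | iConjN2 {Γ A B} : PRK Γ (MProp.cn B) → PRK Γ (MProp.sn (PureProp.conj A B))
  | eConjN {Γ A B P} : PRK Γ (MProp.sn (PureProp.conj A B)) →
      PRK (insert (MProp.cn A) Γ) P → PRK (insert (MProp.cn B) Γ) P → PRK Γ P
  | iNegN {Γ A} : PRK Γ (MProp.cp A) → PRK Γ (MProp.sn (PureProp.neg A))
  | eNegN {Γ A} : PRK Γ (MProp.sn (PureProp.neg A)) → PRK Γ (MProp.cp A)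
  | icN {Γ A} : PRK (insert (MProp.cp A) Γ) (MProp.sn A) → PRK Γ (MProp.cn A)
  | ecN {Γ A} : PRK Γ (MProp.cn A) → PRK Γ (MProp.cp A) → PRK Γ (MProp.sn A)

/-- Generalized absurdity is admissible in PRK. -/
theorem generalized_absurdity (Γ : Finset MProp) (P Q : MProp)
    (h1 : PRK Γ P) (h2 : PRK Γ P.opp) : PRK Γ Q := by
  cases P with
  | sp A => exact .abs (P := .sp A) trivial h1 h2
  | sn A => exact .abs (P := .sn A) trivial h1 h2
  -- In the classical cases `ecP` and `ecN` yield both A⁺ and A⁻, which are strong opposites.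
  | cp A => exact .abs (P := .sp A) trivial (.ecP h1 h2) (.ecN h2 h1)
  | cn A => exact .abs (P := .sp A) trivial (.ecP h2 h1) (.ecN h1 h2)
end

section
/- In system PRK the contraposition rule is admissible: if P is a classical moded proposition (of the form A⊕ or A⊖) and Γ,P ⊢ Q is derivable, then Γ,Q~ ⊢ P~ is derivable. -/
theorem PRK.weaken {Γ Δ : Finset MProp} {P : MProp} (h : PRK Γ P) (hs : Γ ⊆ Δ) : PRK Δ P := by
  induction h generalizing Δ with
  | ax hm => exact .ax (hs hm)
  | abs hP _ _ ih₁ ih₂ => exact .abs hP (ih₁ hs) (ih₂ hs)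
  | iConjP _ _ ih₁ ih₂ => exact .iConjP (ih₁ hs) (ih₂ hs)
  | eConjP1 _ ih => exact .eConjP1 (ih hs)
  | eConjP2 _ ih => exact .eConjP2 (ih hs)
  | iDisjP1 _ ih => exact .iDisjP1 (ih hs)
  | iDisjP2 _ ih => exact .iDisjP2 (ih hs)
  | eDisjP _ _ _ ih ih₁ ih₂ =>
    exact .eDisjP (ih hs) (ih₁ (Finset.insert_subset_insert _ hs))
      (ih₂ (Finset.insert_subset_insert _ hs))
  | iNegP _ ih => exact .iNegP (ih hs)
  | eNegP _ ih => exact .eNegP (ih hs)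
  | icP _ ih => exact .icP (ih (Finset.insert_subset_insert _ hs))
  | ecP _ _ ih₁ ih₂ => exact .ecP (ih₁ hs) (ih₂ hs)
  | iDisjN _ _ ih₁ ih₂ => exact .iDisjN (ih₁ hs) (ih₂ hs)
  | eDisjN1 _ ih => exact .eDisjN1 (ih hs)
  | eDisjN2 _ ih => exact .eDisjN2 (ih hs)
  | iConjN1 _ ih => exact .iConjN1 (ih hs)
  | iConjN2 _ ih => exact .iConjN2 (ih hs)
  | eConjN _ _ _ ih ih₁ ih₂ =>
    exact .eConjN (ih hs) (ih₁ (Finset.insert_subset_insert _ hs))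
      (ih₂ (Finset.insert_subset_insert _ hs))
  | iNegN _ ih => exact .iNegN (ih hs)
  | eNegN _ ih => exact .eNegN (ih hs)
  | icN _ ih => exact .icN (ih (Finset.insert_subset_insert _ hs))
  | ecN _ _ ih₁ ih₂ => exact .ecN (ih₁ hs) (ih₂ hs)

/-- The rule `Abs` without the restriction to strong propositions: from `A⊕` and `A⊖` the `EC`
rules give the strong contradiction `A⁺`, `A⁻`. -/
theorem PRK.explode {Γ : Finset MProp} {Q R : MProp} (h : PRK Γ Q) (hopp : PRK Γ Q.opp) :
    PRK Γ R := by
  cases Q with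
  | sp A => exact .abs (P := .sp A) trivial h hopp
  | sn A => exact .abs (P := .sn A) trivial h hopp
  | cp A => exact .abs (P := .sp A) trivial (.ecP h hopp) (.ecN hopp h)
  | cn A => exact .abs (P := .sp A) trivial (.ecP hopp h) (.ecN h hopp)

/-- Contraposition is admissible in PRK for classical P. -/
theorem contraposition (Γ : Finset MProp) (P Q : MProp)
    (hP : P.isClassical) (h : PRK (insert P Γ) Q) :
    PRK (insert Q.opp Γ) P.opp := by
  have key (R : MProp) : PRK (insert P (insert Q.opp Γ)) R :=
    (h.weaken (Finset.insert_subset_insert _ (Finset.subset_insert _ _))).explode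
      (.ax (by simp))
  cases P with
  | sp A => exact hP.elim
  | sn A => exact hP.elim
  | cp A => exact .icN (key _)
  | cn A => exact .icP (key _)
end

section
/- In system PRK the classical strengthening rule is admissible: if P is a classical moded proposition (of the form A⊕ or A⊖) and Γ,P~ ⊢ P is derivable, then Γ ⊢ P is derivable. -/
/-- Classical strengthening is admissible in PRK for classical P. -/
theorem classical_strengthening (Γ : Finset MProp) (P : MProp)
    (hP : P.isClassical) (h : PRK (insert P.opp Γ) P) :
    PRK Γ P := by
  -- With `P.opp` assumed, `h` and the assumption give the strong version of `P` by (EC);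
  -- discharging the assumption by (IC) yields `P`.
  cases P with
  | sp A => exact hP.elim
  | sn A => exact hP.elim
  | cp A => exact .icP (.ecP h (.ax (Finset.mem_insert_self _ _)))
  | cn A => exact .icN (.ecN h (.ax (Finset.mem_insert_self _ _)))
end

section
/- Duality principle for PRK: if P₁,…,Pₙ ⊢ Q is derivable in PRK, then P₁^⊥,…,Pₙ^⊥ ⊢ Q^⊥ is derivable in PRK, where (·)^⊥ is the duality operation on moded propositions. -/
/-- The dual of a pure proposition. -/
def PureProp.dual : PureProp → PureProp
  | .var a => .var a
  | .conj A B => .disj A.dual B.dual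
  | .disj A B => .conj A.dual B.dual
  | .neg A => .neg A.dual

/-- The dual of a moded proposition. -/
def MProp.dual : MProp → MProp
  | .sp A => .sn A.dual
  | .sn A => .sp A.dual
  | .cp A => .cn A.dual
  | .cn A => .cp A.dual

theorem MProp.dual_opp (P : MProp) : P.opp.dual = P.dual.opp := by
  cases P <;> rfl

theorem MProp.isStrong.dual {P : MProp} (h : P.isStrong) : P.dual.isStrong := by
  cases P <;> exact h

/-- Duality principle for PRK. -/
theorem duality_principle (Γ : Finset MProp) (Q : MProp)
    (h : PRK Γ Q) : PRK (Γ.image MProp.dual) Q.dual := by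
  induction h with
  | ax h => exact .ax (Finset.mem_image_of_mem _ h)
  | abs hs _ _ ih₁ ih₂ => exact .abs hs.dual ih₁ (MProp.dual_opp _ ▸ ih₂)
  | iConjP _ _ ih₁ ih₂ => exact .iDisjN ih₁ ih₂
  | eConjP1 _ ih => exact .eDisjN1 ih
  | eConjP2 _ ih => exact .eDisjN2 ih
  | iDisjP1 _ ih => exact .iConjN1 ih
  | iDisjP2 _ ih => exact .iConjN2 ih
  | eDisjP _ _ _ ih ih₁ ih₂ =>
    rw [Finset.image_insert] at ih₁ ih₂
    exact .eConjN ih ih₁ ih₂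
  | iNegP _ ih => exact .iNegN ih
  | eNegP _ ih => exact .eNegN ih
  | icP _ ih =>
    rw [Finset.image_insert] at ih
    exact .icN ih
  | ecP _ _ ih₁ ih₂ => exact .ecN ih₁ ih₂
  | iDisjN _ _ ih₁ ih₂ => exact .iConjP ih₁ ih₂
  | eDisjN1 _ ih => exact .eConjP1 ih
  | eDisjN2 _ ih => exact .eConjP2 ih
  | iConjN1 _ ih => exact .iDisjP1 ih
  | iConjN2 _ ih => exact .iDisjP2 ih
  | eConjN _ _ _ ih ih₁ ih₂ =>
    rw [Finset.image_insert] at ih₁ ih₂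
    exact .eDisjP ih ih₁ ih₂
  | iNegN _ ih => exact .iNegP ih
  | eNegN _ ih => exact .eNegP ih
  | icN _ ih =>
    rw [Finset.image_insert] at ih
    exact .icP ih
  | ecN _ _ ih₁ ih₂ => exact .ecP ih₁ ih₂
end

section
/- The law of excluded middle and the law of non-contradiction hold classically in PRK: for every pure proposition A, the judgments ⊢ (A ∨ ¬A)⊕ and ⊢ (A ∧ ¬A)⊖ (with empty context) are derivable in PRK. -/
/-- The law of excluded middle and the law of non-contradiction hold classically in PRK. -/
theorem lem_and_noncontradiction (A : PureProp) :
    PRK ∅ (MProp.cp (PureProp.disj A (PureProp.neg A))) ∧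
    PRK ∅ (MProp.cn (PureProp.conj A (PureProp.neg A))) := by
  constructor
  · refine .icP (.iDisjP2 (.icP (.iNegP (.icN ?_))))
    -- Absurdity at `(A ∨ ¬A)⁺`, obtained from the hypothesis `A⊕`.
    refine .abs (P := .sp (.disj A (.neg A))) trivial (.iDisjP1 (.ax (by simp))) ?_
    exact .ecN (.ax (by simp)) (.icP (.iDisjP1 (.ax (by simp))))
  · refine .icN (.iConjN2 (.icN (.iNegN (.icP ?_))))
    -- Absurdity at `(A ∧ ¬A)⁻`, obtained from the hypothesis `A⊖`.
    refine .abs (P := .sn (.conj A (.neg A))) trivial (.iConjN1 (.ax (by simp))) ?_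
    exact .ecP (.ax (by simp)) (.icN (.iConjN1 (.ax (by simp))))
end

section
/- Stabilization of forcing: in any Kripke model for PRK, for every world w and every moded proposition P, there exists a world w' ≥ w such that either w' ⊩ P or w' ⊩ P~, but not both. -/
/-- A Kripke model for PRK. -/
structure KripkeModel (W : Type) where
  le : W → W → Prop
  le_refl : ∀ w, le w w
  le_trans : ∀ {a b c}, le a b → le b c → le a c
  le_antisymm : ∀ {a b}, le a b → le b a → a = b
  Vp : W → ℕ → Prop
  Vn : W → ℕ → Prop
  monoP : ∀ {w w'}, le w w' → ∀ {a}, Vp w a → Vp w' a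
  monoN : ∀ {w w'}, le w w' → ∀ {a}, Vn w a → Vn w' a
  stab : ∀ w a, ∃ w', le w w' ∧ Xor' (Vp w' a) (Vn w' a)

def PureProp.size : PureProp → ℕ
  | .var _ => 1
  | .conj A B => 1 + A.size + B.size
  | .disj A B => 1 + A.size + B.size
  | .neg A => 1 + A.size

def MProp.meas : MProp → ℕ
  | .sp A => 2 * A.size
  | .sn A => 2 * A.size
  | .cp A => 2 * A.size + 1
  | .cn A => 2 * A.size + 1

/-- The forcing relation w ⊩ P, defined by recursion on the measure. -/
def Forces {W : Type} (M : KripkeModel W) : W → MProp → Prop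
  | w, .sp (.var a) => M.Vp w a
  | w, .sn (.var a) => M.Vn w a
  | w, .sp (.conj A B) => Forces M w (.cp A) ∧ Forces M w (.cp B)
  | w, .sn (.conj A B) => Forces M w (.cn A) ∨ Forces M w (.cn B)
  | w, .sp (.disj A B) => Forces M w (.cp A) ∨ Forces M w (.cp B)
  | w, .sn (.disj A B) => Forces M w (.cn A) ∧ Forces M w (.cn B)
  | w, .sp (.neg A) => Forces M w (.cn A)
  | w, .sn (.neg A) => Forces M w (.cp A)
  | w, .cp A => ∀ w', M.le w w' → ¬ Forces M w' (.sn A)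
  | w, .cn A => ∀ w', M.le w w' → ¬ Forces M w' (.sp A)
termination_by w P => P.meas
decreasing_by all_goals simp [MProp.meas, PureProp.size] <;> omega

/-- Forcing of a classical proposition quantifies over all later worlds, so it is persistent with no
induction needed. -/
theorem Forces.mono_cp {W : Type} {M : KripkeModel W} {w w' : W} (h : M.le w w') {A : PureProp}
    (hw : Forces M w (.cp A)) : Forces M w' (.cp A) := by
  rw [Forces] at hw ⊢
  exact fun v hv => hw v (M.le_trans h hv)

theorem Forces.mono_cn {W : Type} {M : KripkeModel W} {w w' : W} (h : M.le w w') {A : PureProp}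
    (hw : Forces M w (.cn A)) : Forces M w' (.cn A) := by
  rw [Forces] at hw ⊢
  exact fun v hv => hw v (M.le_trans h hv)

theorem Forces.mono_sp {W : Type} {M : KripkeModel W} {w w' : W} (h : M.le w w') {A : PureProp}
    (hw : Forces M w (.sp A)) : Forces M w' (.sp A) := by
  cases A <;> rw [Forces] at hw ⊢
  · exact M.monoP h hw
  · exact hw.imp (mono_cp h) (mono_cp h)
  · exact hw.imp (mono_cp h) (mono_cp h)
  · exact mono_cn h hw

theorem Forces.mono_sn {W : Type} {M : KripkeModel W} {w w' : W} (h : M.le w w') {A : PureProp}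
    (hw : Forces M w (.sn A)) : Forces M w' (.sn A) := by
  cases A <;> rw [Forces] at hw ⊢
  · exact M.monoN h hw
  · exact hw.imp (mono_cn h) (mono_cn h)
  · exact hw.imp (mono_cn h) (mono_cn h)
  · exact mono_cp h hw

/-- The pair `P`, `Q` of moded propositions is determined in `M`: no world forces both, and above
every world some world forces one of them. -/
def Determined {W : Type} (M : KripkeModel W) (P Q : MProp) : Prop :=
  (∀ w, ¬ (Forces M w P ∧ Forces M w Q)) ∧
    ∀ w, ∃ w', M.le w w' ∧ (Forces M w' P ∨ Forces M w' Q)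

theorem Determined.symm {W : Type} {M : KripkeModel W} {P Q : MProp} (h : Determined M P Q) :
    Determined M Q P :=
  ⟨fun w hw => h.1 w hw.symm, fun w => (h.2 w).imp fun _ hv => ⟨hv.1, hv.2.symm⟩⟩

/-- By persistence and consistency, a world forcing `A⁺` forces `A⊕`, and likewise for `A⁻` and
`A⊖`. -/
theorem Determined.classical {W : Type} {M : KripkeModel W} {A : PureProp}
    (h : Determined M (.sp A) (.sn A)) : Determined M (.cp A) (.cn A) := by
  refine ⟨fun w hw => ?_, fun w => ?_⟩
  · rw [Forces, Forces] at hw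
    obtain ⟨v, hv, hp | hn⟩ := h.2 w
    · exact hw.2 v hv hp
    · exact hw.1 v hv hn
  · obtain ⟨v, hv, hs⟩ := h.2 w
    refine ⟨v, hv, ?_⟩
    rw [Forces, Forces]
    exact hs.imp (fun hp u hu hn => h.1 u ⟨hp.mono_sp hu, hn⟩)
      (fun hn u hu hp => h.1 u ⟨hp, hn.mono_sn hu⟩)

theorem determined_strong {W : Type} (M : KripkeModel W) (A : PureProp) :
    Determined M (.sp A) (.sn A) := by
  induction A with
  | var a =>
    refine ⟨fun w hw => ?_, fun w => ?_⟩
    · -- Both signs would persist to the world where exactly one of them holds.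
      rw [Forces, Forces] at hw
      obtain ⟨v, hv, hx⟩ := M.stab w a
      exact hx.elim (fun hx => hx.2 (M.monoN hv hw.2)) (fun hx => hx.2 (M.monoP hv hw.1))
    · obtain ⟨v, hv, hx⟩ := M.stab w a
      refine ⟨v, hv, ?_⟩
      rw [Forces, Forces]
      exact hx.imp And.left And.left
  | conj A B ihA ihB =>
    refine ⟨fun w hw => ?_, fun w => ?_⟩
    · rw [Forces, Forces] at hw
      obtain ⟨⟨hA, hB⟩, hn | hn⟩ := hw
      · exact ihA.classical.1 w ⟨hA, hn⟩
      · exact ihB.classical.1 w ⟨hB, hn⟩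
    · obtain ⟨v, hv, hA⟩ := ihA.classical.2 w
      obtain ⟨u, hu, hB⟩ := ihB.classical.2 v
      refine ⟨u, M.le_trans hv hu, ?_⟩
      rw [Forces, Forces]
      have := hA.imp (Forces.mono_cp hu) (Forces.mono_cn hu)
      tauto
  | disj A B ihA ihB =>
    refine ⟨fun w hw => ?_, fun w => ?_⟩
    · rw [Forces, Forces] at hw
      obtain ⟨hp | hp, hA, hB⟩ := hw
      · exact ihA.classical.1 w ⟨hp, hA⟩
      · exact ihB.classical.1 w ⟨hp, hB⟩
    · obtain ⟨v, hv, hA⟩ := ihA.classical.2 w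
      obtain ⟨u, hu, hB⟩ := ihB.classical.2 v
      refine ⟨u, M.le_trans hv hu, ?_⟩
      rw [Forces, Forces]
      have := hA.imp (Forces.mono_cp hu) (Forces.mono_cn hu)
      tauto
  | neg A ih =>
    have h := ih.classical.symm
    refine ⟨fun w hw => ?_, fun w => ?_⟩
    · rw [Forces, Forces] at hw
      exact h.1 w hw
    · obtain ⟨v, hv, hs⟩ := h.2 w
      refine ⟨v, hv, ?_⟩
      rw [Forces, Forces]
      exact hs

/-- Stabilization of forcing. -/
theorem forces_stabilization {W : Type} (M : KripkeModel W) (w : W) (P : MProp) :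
    ∃ w', M.le w w' ∧ Xor' (Forces M w' P) (Forces M w' P.opp) := by
  have key : Determined M P P.opp := by
    cases P with
    | sp A => exact determined_strong M A
    | sn A => exact (determined_strong M A).symm
    | cp A => exact (determined_strong M A).classical
    | cn A => exact (determined_strong M A).classical.symm
  obtain ⟨v, hv, hs⟩ := key.2 w
  exact ⟨v, hv, hs.imp (fun hp => ⟨hp, fun hq => key.1 v ⟨hp, hq⟩⟩)
    (fun hq => ⟨hq, fun hp => key.1 v ⟨hp, hq⟩⟩)⟩
end

section
/- Non-contradiction of forcing: in any Kripke model for PRK, if w ⊩ P then it is not the case that w ⊩ P~. -/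
theorem forces_cp_mono {W : Type} (M : KripkeModel W) {w w' : W} {A : PureProp}
    (hw : M.le w w') (h : Forces M w (.cp A)) : Forces M w' (.cp A) := by
  rw [Forces] at h ⊢
  exact fun u hu => h u (M.le_trans hw hu)

theorem forces_cn_mono {W : Type} (M : KripkeModel W) {w w' : W} {A : PureProp}
    (hw : M.le w w') (h : Forces M w (.cn A)) : Forces M w' (.cn A) := by
  rw [Forces] at h ⊢
  exact fun u hu => h u (M.le_trans hw hu)

theorem forces_sp_mono {W : Type} (M : KripkeModel W) {w w' : W} {A : PureProp}
    (hw : M.le w w') (h : Forces M w (.sp A)) : Forces M w' (.sp A) := by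
  cases A <;> rw [Forces] at h ⊢
  · exact M.monoP hw h
  · exact h.imp (forces_cp_mono M hw) (forces_cp_mono M hw)
  · exact h.imp (forces_cp_mono M hw) (forces_cp_mono M hw)
  · exact forces_cn_mono M hw h

theorem forces_sn_mono {W : Type} (M : KripkeModel W) {w w' : W} {A : PureProp}
    (hw : M.le w w') (h : Forces M w (.sn A)) : Forces M w' (.sn A) := by
  cases A <;> rw [Forces] at h ⊢
  · exact M.monoN hw h
  · exact h.imp (forces_cn_mono M hw) (forces_cn_mono M hw)
  · exact h.imp (forces_cn_mono M hw) (forces_cn_mono M hw)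
  · exact forces_cp_mono M hw h

/-- Above every world some world forces `A⁺` or `A⁻`. -/
def Decided {W : Type} (M : KripkeModel W) (A : PureProp) : Prop :=
  ∀ w, ∃ w', M.le w w' ∧ (Forces M w' (.sp A) ∨ Forces M w' (.sn A))

/-- No world forces both `A⁺` and `A⁻`. -/
def StrongConsistent {W : Type} (M : KripkeModel W) (A : PureProp) : Prop :=
  ∀ w, Forces M w (.sp A) → ¬ Forces M w (.sn A)

theorem Decided.not_cp_cn {W : Type} {M : KripkeModel W} {A : PureProp} (hd : Decided M A)
    (w : W) (hp : Forces M w (.cp A)) (hn : Forces M w (.cn A)) : False := by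
  rw [Forces] at hp; rw [Forces] at hn
  obtain ⟨w', hw, h | h⟩ := hd w
  · exact hn w' hw h
  · exact hp w' hw h

/-- Stabilization for the classical modes: strong forcing implies classical forcing, given
consistency. -/
theorem Decided.classical {W : Type} {M : KripkeModel W} {A : PureProp} (hd : Decided M A)
    (hc : StrongConsistent M A) (w : W) :
    ∃ w', M.le w w' ∧ (Forces M w' (.cp A) ∨ Forces M w' (.cn A)) := by
  obtain ⟨w', hw, h | h⟩ := hd w
  · refine ⟨w', hw, .inl ?_⟩
    rw [Forces]
    exact fun u hu => hc u (forces_sp_mono M hu h)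
  · refine ⟨w', hw, .inr ?_⟩
    rw [Forces]
    exact fun u hu hu' => hc u hu' (forces_sn_mono M hu h)

theorem decided_and_consistent {W : Type} (M : KripkeModel W) (A : PureProp) :
    Decided M A ∧ StrongConsistent M A := by
  induction A with
  | var a =>
    refine ⟨fun w => ?_, fun w hp hn => ?_⟩
    · obtain ⟨w', hw, h⟩ := M.stab w a
      refine ⟨w', hw, ?_⟩
      rw [Forces.eq_1, Forces.eq_2]
      exact h.imp And.left And.left
    · rw [Forces] at hp; rw [Forces] at hn
      obtain ⟨w', hw, h | h⟩ := M.stab w a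
      · exact h.2 (M.monoN hw hn)
      · exact h.2 (M.monoP hw hp)
  | conj A B ihA ihB =>
    refine ⟨fun w => ?_, fun w hp hn => ?_⟩
    · obtain ⟨u, hu, hA⟩ := ihA.1.classical ihA.2 w
      obtain ⟨v, hv, hB⟩ := ihB.1.classical ihB.2 u
      refine ⟨v, M.le_trans hu hv, ?_⟩
      rw [Forces.eq_3, Forces.eq_4]
      rcases hA with hA | hA
      · rcases hB with hB | hB
        · exact .inl ⟨forces_cp_mono M hv hA, hB⟩
        · exact .inr (.inr hB)
      · exact .inr (.inl (forces_cn_mono M hv hA))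
    · rw [Forces] at hp; rw [Forces] at hn
      exact hn.elim (ihA.1.not_cp_cn w hp.1) (ihB.1.not_cp_cn w hp.2)
  | disj A B ihA ihB =>
    refine ⟨fun w => ?_, fun w hp hn => ?_⟩
    · obtain ⟨u, hu, hA⟩ := ihA.1.classical ihA.2 w
      obtain ⟨v, hv, hB⟩ := ihB.1.classical ihB.2 u
      refine ⟨v, M.le_trans hu hv, ?_⟩
      rw [Forces.eq_5, Forces.eq_6]
      rcases hA with hA | hA
      · exact .inl (.inl (forces_cp_mono M hv hA))
      · rcases hB with hB | hB
        · exact .inl (.inr hB)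
        · exact .inr ⟨forces_cn_mono M hv hA, hB⟩
    · rw [Forces] at hp; rw [Forces] at hn
      exact hp.elim (fun h => ihA.1.not_cp_cn w h hn.1) (fun h => ihB.1.not_cp_cn w h hn.2)
  | neg A ih =>
    refine ⟨fun w => ?_, fun w hp hn => ?_⟩
    · obtain ⟨u, hu, hA⟩ := ih.1.classical ih.2 w
      refine ⟨u, hu, ?_⟩
      rw [Forces.eq_7, Forces.eq_8]
      exact hA.symm
    · rw [Forces] at hp; rw [Forces] at hn
      exact ih.1.not_cp_cn w hn hp

/-- Non-contradiction of forcing. -/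
theorem forces_noncontradiction {W : Type} (M : KripkeModel W) (w : W) (P : MProp)
    (h : Forces M w P) : ¬ Forces M w P.opp := by
  intro h'
  cases P with
  | sp A => exact (decided_and_consistent M A).2 w h h'
  | sn A => exact (decided_and_consistent M A).2 w h' h
  | cp A => exact (decided_and_consistent M A).1.not_cp_cn w h h'
  | cn A => exact (decided_and_consistent M A).1.not_cp_cn w h' h
end

section
/- Soundness of PRK with respect to Kripke semantics: if Γ ⊢ P is derivable in PRK, then in every Kripke model for PRK and every world w, if w ⊩ Q for every Q ∈ Γ, then w ⊩ P. -/
variable {W : Type} {M : KripkeModel W}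

theorem forces_mono : ∀ (P : MProp) {w w' : W}, M.le w w' → Forces M w P → Forces M w' P
  | .cp A, w, w', hle, h => by
    rw [Forces] at h ⊢
    exact fun v hv => h v (M.le_trans hle hv)
  | .cn A, w, w', hle, h => by
    rw [Forces] at h ⊢
    exact fun v hv => h v (M.le_trans hle hv)
  | .sp (.var a), w, w', hle, h => by
    rw [Forces] at h ⊢
    exact M.monoP hle h
  | .sn (.var a), w, w', hle, h => by
    rw [Forces] at h ⊢
    exact M.monoN hle h
  | .sp (.conj A B), w, w', hle, h => by
    rw [Forces] at h ⊢
    exact h.imp (forces_mono _ hle) (forces_mono _ hle)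
  | .sn (.conj A B), w, w', hle, h => by
    rw [Forces] at h ⊢
    exact h.imp (forces_mono _ hle) (forces_mono _ hle)
  | .sp (.disj A B), w, w', hle, h => by
    rw [Forces] at h ⊢
    exact h.imp (forces_mono _ hle) (forces_mono _ hle)
  | .sn (.disj A B), w, w', hle, h => by
    rw [Forces] at h ⊢
    exact h.imp (forces_mono _ hle) (forces_mono _ hle)
  | .sp (.neg A), w, w', hle, h => by
    rw [Forces] at h ⊢
    exact forces_mono _ hle h
  | .sn (.neg A), w, w', hle, h => by
    rw [Forces] at h ⊢
    exact forces_mono _ hle h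
termination_by P => P.meas
decreasing_by all_goals simp [MProp.meas, PureProp.size] <;> omega

/-- No world forces both `A⁺` and `A⁻`. -/
def Consistent (M : KripkeModel W) (A : PureProp) : Prop :=
  ∀ w, Forces M w (.sp A) → ¬ Forces M w (.sn A)

/-- Above every world some world forces `A⁺` or `A⁻`. -/
def Decides (M : KripkeModel W) (A : PureProp) : Prop :=
  ∀ w, ∃ w', M.le w w' ∧ (Forces M w' (.sp A) ∨ Forces M w' (.sn A))

theorem Consistent.cp_of_sp {A : PureProp} (hA : Consistent M A) {w : W}
    (h : Forces M w (.sp A)) : Forces M w (.cp A) := by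
  rw [Forces]
  exact fun v hv => hA v (forces_mono _ hv h)

theorem Consistent.cn_of_sn {A : PureProp} (hA : Consistent M A) {w : W}
    (h : Forces M w (.sn A)) : Forces M w (.cn A) := by
  rw [Forces]
  exact fun v hv h' => hA v h' (forces_mono _ hv h)

theorem Decides.not_cp_and_cn {A : PureProp} (hA : Decides M A) {w : W}
    (hp : Forces M w (.cp A)) (hn : Forces M w (.cn A)) : False := by
  rw [Forces] at hp
  rw [Forces] at hn
  obtain ⟨v, hv, h | h⟩ := hA w
  · exact hn v hv h
  · exact hp v hv h

/-- Some world above `w` forces a classical mode of `A`; this is the form in which decision is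
passed from a proposition to the compounds containing it. -/
theorem exists_cp_or_cn {A : PureProp} (hA : Consistent M A ∧ Decides M A) (w : W) :
    ∃ w', M.le w w' ∧ (Forces M w' (.cp A) ∨ Forces M w' (.cn A)) := by
  obtain ⟨v, hv, h⟩ := hA.2 w
  exact ⟨v, hv, h.imp hA.1.cp_of_sp hA.1.cn_of_sn⟩

theorem consistent_and_decides (M : KripkeModel W) (A : PureProp) :
    Consistent M A ∧ Decides M A := by
  induction A with
  | var a =>
    constructor
    · intro w hp hn
      rw [Forces] at hp
      rw [Forces] at hn
      obtain ⟨v, hv, h⟩ := M.stab w a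
      have hp' := M.monoP hv hp
      have hn' := M.monoN hv hn
      exact h.elim (fun h => h.2 hn') (fun h => h.2 hp')
    · intro w
      obtain ⟨v, hv, h⟩ := M.stab w a
      simp only [Forces]
      exact ⟨v, hv, h.imp And.left And.left⟩
  | conj A B ihA ihB =>
    constructor
    · intro w hp hn
      rw [Forces] at hp
      rw [Forces] at hn
      exact hn.elim (ihA.2.not_cp_and_cn hp.1) (ihB.2.not_cp_and_cn hp.2)
    · intro w
      simp only [Forces.eq_3, Forces.eq_4]
      obtain ⟨u, hu, hA | hA⟩ := exists_cp_or_cn ihA w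
      · obtain ⟨v, hv, hB | hB⟩ := exists_cp_or_cn ihB u
        · exact ⟨v, M.le_trans hu hv, .inl ⟨forces_mono _ hv hA, hB⟩⟩
        · exact ⟨v, M.le_trans hu hv, .inr (.inr hB)⟩
      · exact ⟨u, hu, .inr (.inl hA)⟩
  | disj A B ihA ihB =>
    constructor
    · intro w hp hn
      rw [Forces] at hp
      rw [Forces] at hn
      exact hp.elim (fun h => ihA.2.not_cp_and_cn h hn.1) (fun h => ihB.2.not_cp_and_cn h hn.2)
    · intro w
      simp only [Forces.eq_5, Forces.eq_6]
      obtain ⟨u, hu, hA | hA⟩ := exists_cp_or_cn ihA w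
      · exact ⟨u, hu, .inl (.inl hA)⟩
      · obtain ⟨v, hv, hB | hB⟩ := exists_cp_or_cn ihB u
        · exact ⟨v, M.le_trans hu hv, .inl (.inr hB)⟩
        · exact ⟨v, M.le_trans hu hv, .inr ⟨forces_mono _ hv hA, hB⟩⟩
  | neg A ih =>
    constructor
    · intro w hp hn
      rw [Forces] at hp
      rw [Forces] at hn
      exact ih.2.not_cp_and_cn hn hp
    · intro w
      simp only [Forces.eq_7, Forces.eq_8]
      obtain ⟨v, hv, h⟩ := exists_cp_or_cn ih w
      exact ⟨v, hv, h.symm⟩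

theorem forces_insert {Γ : Finset MProp} {P : MProp} {w : W} (hP : Forces M w P)
    (hΓ : ∀ Q ∈ Γ, Forces M w Q) : ∀ Q ∈ insert P Γ, Forces M w Q :=
  Finset.forall_mem_insert _ _ _ |>.2 ⟨hP, hΓ⟩

/-- Soundness of PRK with respect to Kripke semantics. -/
theorem prk_soundness {Γ : Finset MProp} {P : MProp} (h : PRK Γ P) :
    ∀ (W : Type) (M : KripkeModel W) (w : W),
      (∀ Q ∈ Γ, Forces M w Q) → Forces M w P := by
  intro W M
  have cons (A : PureProp) : Consistent M A := (consistent_and_decides M A).1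
  have dec (A : PureProp) : Decides M A := (consistent_and_decides M A).2
  induction h with
  | ax hP => exact fun w hΓ => hΓ _ hP
  | @abs Γ P Q hs _ _ ih₁ ih₂ =>
    intro w hΓ
    have h₁ := ih₁ w hΓ
    have h₂ := ih₂ w hΓ
    cases P with
    | sp A => exact (cons A w h₁ h₂).elim
    | sn A => exact (cons A w h₂ h₁).elim
    | cp A => exact hs.elim
    | cn A => exact hs.elim
  | iConjP _ _ ih₁ ih₂ | iDisjN _ _ ih₁ ih₂ =>
    intro w hΓ
    rw [Forces]
    exact ⟨ih₁ w hΓ, ih₂ w hΓ⟩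
  | eConjP1 _ ih | eDisjN1 _ ih =>
    intro w hΓ
    have h := ih w hΓ
    rw [Forces] at h
    exact h.1
  | eConjP2 _ ih | eDisjN2 _ ih =>
    intro w hΓ
    have h := ih w hΓ
    rw [Forces] at h
    exact h.2
  | iDisjP1 _ ih | iConjN1 _ ih =>
    intro w hΓ
    rw [Forces]
    exact .inl (ih w hΓ)
  | iDisjP2 _ ih | iConjN2 _ ih =>
    intro w hΓ
    rw [Forces]
    exact .inr (ih w hΓ)
  | eDisjP _ _ _ ih ih₁ ih₂ | eConjN _ _ _ ih ih₁ ih₂ =>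
    intro w hΓ
    have h := ih w hΓ
    rw [Forces] at h
    exact h.elim (fun h => ih₁ w (forces_insert h hΓ)) (fun h => ih₂ w (forces_insert h hΓ))
  | iNegP _ ih | iNegN _ ih =>
    intro w hΓ
    rw [Forces]
    exact ih w hΓ
  | eNegP _ ih | eNegN _ ih =>
    intro w hΓ
    have h := ih w hΓ
    rw [Forces] at h
    exact h
  | @icP Γ A _ ih =>
    intro w hΓ
    rw [Forces]
    -- A world above `w` forcing `A⁻` forces `A⊖`, hence `A⁺` by the premise.
    intro v hv hn
    exact cons A v
      (ih v (forces_insert ((cons A).cn_of_sn hn) fun Q hQ => forces_mono Q hv (hΓ Q hQ))) hn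
  | @icN Γ A _ ih =>
    intro w hΓ
    rw [Forces]
    intro v hv hp
    exact cons A v hp
      (ih v (forces_insert ((cons A).cp_of_sp hp) fun Q hQ => forces_mono Q hv (hΓ Q hQ)))
  | @ecP Γ A _ _ ih₁ ih₂ =>
    exact fun w hΓ => ((dec A).not_cp_and_cn (ih₁ w hΓ) (ih₂ w hΓ)).elim
  | @ecN Γ A _ _ ih₁ ih₂ =>
    exact fun w hΓ => ((dec A).not_cp_and_cn (ih₂ w hΓ) (ih₁ w hΓ)).elim
end

section
/- Subject reduction for λPRK: if Γ ⊢ t : P is derivable in the λPRK type system and t → s is a reduction step of λPRK, then Γ ⊢ s : P is derivable. -/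
inductive Sign : Type | pos | neg
  deriving DecidableEq

def Sign.flip : Sign → Sign
  | .pos => .neg
  | .neg => .pos

/-- Terms of λPRK, with de Bruijn indices for bound variables
    (a faithful rendering of terms modulo α-renaming). -/
inductive Tm : Type
  | var : ℕ → Tm
  | abs : MProp → Tm → Tm → Tm                    -- abs_P(t,s)
  | pair : Sign → Tm → Tm → Tm                    -- ⟨t,s⟩±
  | proj : Sign → Bool → Tm → Tm                  -- πᵢ±(t), i encoded by a Bool
  | inj : Sign → Bool → Tm → Tm                   -- inᵢ±(t)
  | case : Sign → Tm → MProp → Tm → MProp → Tm → Tm  -- case±(t, x:P.s, y:Q.u)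
  | negi : Sign → Tm → Tm                         -- ¬i±(t)
  | nege : Sign → Tm → Tm                         -- ¬e±(t)
  | lam : Sign → MProp → Tm → Tm                  -- λ±x:P.t
  | app : Sign → Tm → Tm → Tm                     -- t •± s
  deriving DecidableEq

/-- Shift free de Bruijn indices ≥ c up by d. -/
def Tm.shift (d : ℕ) : ℕ → Tm → Tm
  | c, .var k => if k < c then .var k else .var (k + d)
  | c, .abs P t s => .abs P (Tm.shift d c t) (Tm.shift d c s)
  | c, .pair sg t s => .pair sg (Tm.shift d c t) (Tm.shift d c s)
  | c, .proj sg i t => .proj sg i (Tm.shift d c t)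
  | c, .inj sg i t => .inj sg i (Tm.shift d c t)
  | c, .case sg t P s Q u =>
      .case sg (Tm.shift d c t) P (Tm.shift d (c+1) s) Q (Tm.shift d (c+1) u)
  | c, .negi sg t => .negi sg (Tm.shift d c t)
  | c, .nege sg t => .nege sg (Tm.shift d c t)
  | c, .lam sg P t => .lam sg P (Tm.shift d (c+1) t)
  | c, .app sg t s => .app sg (Tm.shift d c t) (Tm.shift d c s)

/-- Capture-avoiding substitution t[j := s]. -/
def Tm.subst : Tm → ℕ → Tm → Tm
  | .var k, j, s => if k = j then s else if j < k then .var (k - 1) else .var k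
  | .abs P t u, j, s => .abs P (Tm.subst t j s) (Tm.subst u j s)
  | .pair sg t u, j, s => .pair sg (Tm.subst t j s) (Tm.subst u j s)
  | .proj sg i t, j, s => .proj sg i (Tm.subst t j s)
  | .inj sg i t, j, s => .inj sg i (Tm.subst t j s)
  | .case sg t P u Q v, j, s =>
      .case sg (Tm.subst t j s) P (Tm.subst u (j+1) (Tm.shift 1 0 s)) Q (Tm.subst v (j+1) (Tm.shift 1 0 s))
  | .negi sg t, j, s => .negi sg (Tm.subst t j s)
  | .nege sg t, j, s => .nege sg (Tm.subst t j s)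
  | .lam sg P t, j, s => .lam sg P (Tm.subst t (j+1) (Tm.shift 1 0 s))
  | .app sg t u, j, s => .app sg (Tm.subst t j s) (Tm.subst u j s)

/-- abs'(t,s): for t of classical type of sign sg and s of the opposite classical type,
    abs'(t,s) = abs(t •sg s, s •(flip sg) t). -/
def absE (Q : MProp) (sg : Sign) (t s : Tm) : Tm :=
  Tm.abs Q (Tm.app sg t s) (Tm.app sg.flip s t)

/-- One-step reduction of λPRK, closed under arbitrary contexts. -/
inductive Red : Tm → Tm → Prop
  | proj1 {sg t1 t2} : Red (.proj sg false (.pair sg t1 t2)) t1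
  | proj2 {sg t1 t2} : Red (.proj sg true (.pair sg t1 t2)) t2
  | case1 {sg t P Q s1 s2} : Red (.case sg (.inj sg false t) P s1 Q s2) (Tm.subst s1 0 t)
  | case2 {sg t P Q s1 s2} : Red (.case sg (.inj sg true t) P s1 Q s2) (Tm.subst s2 0 t)
  | negRed {sg t} : Red (.nege sg (.negi sg t)) t
  | beta {sg P t s} : Red (.app sg (.lam sg P t) s) (Tm.subst t 0 s)
  | absPairInj1 {Q sg t1 t2 s} :
      Red (.abs Q (.pair sg t1 t2) (.inj sg.flip false s)) (absE Q sg t1 s)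
  | absPairInj2 {Q sg t1 t2 s} :
      Red (.abs Q (.pair sg t1 t2) (.inj sg.flip true s)) (absE Q sg t2 s)
  | absInjPair1 {Q sg t s1 s2} :
      Red (.abs Q (.inj sg false t) (.pair sg.flip s1 s2)) (absE Q sg t s1)
  | absInjPair2 {Q sg t s1 s2} :
      Red (.abs Q (.inj sg true t) (.pair sg.flip s1 s2)) (absE Q sg t s2)
  | absNeg {Q sg t s} :
      Red (.abs Q (.negi sg t) (.negi sg.flip s)) (absE Q sg.flip t s)
  | absCL {Q t t' s} : Red t t' → Red (.abs Q t s) (.abs Q t' s)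
  | absCR {Q t s s'} : Red s s' → Red (.abs Q t s) (.abs Q t s')
  | pairCL {sg t t' s} : Red t t' → Red (.pair sg t s) (.pair sg t' s)
  | pairCR {sg t s s'} : Red s s' → Red (.pair sg t s) (.pair sg t s')
  | projC {sg i t t'} : Red t t' → Red (.proj sg i t) (.proj sg i t')
  | injC {sg i t t'} : Red t t' → Red (.inj sg i t) (.inj sg i t')
  | caseC1 {sg t t' P s Q u} : Red t t' → Red (.case sg t P s Q u) (.case sg t' P s Q u)
  | caseC2 {sg t P s s' Q u} : Red s s' → Red (.case sg t P s Q u) (.case sg t P s' Q u)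
  | caseC3 {sg t P s Q u u'} : Red u u' → Red (.case sg t P s Q u) (.case sg t P s Q u')
  | negiC {sg t t'} : Red t t' → Red (.negi sg t) (.negi sg t')
  | negeC {sg t t'} : Red t t' → Red (.nege sg t) (.nege sg t')
  | lamC {sg P t t'} : Red t t' → Red (.lam sg P t) (.lam sg P t')
  | appCL {sg t t' s} : Red t t' → Red (.app sg t s) (.app sg t' s)
  | appCR {sg t s s'} : Red s s' → Red (.app sg t s) (.app sg t s')

/-- Zero-or-more-step reduction. -/
def RedStar : Tm → Tm → Prop := Relation.ReflTransGen Red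

/-- The λPRK typing judgment Γ ⊢ t : P.  Contexts are lists (de Bruijn). -/
inductive TJ : List MProp → Tm → MProp → Prop
  | var {Γ : List MProp} {n P} : Γ[n]? = some P → TJ Γ (.var n) P
  | absT {Γ t s P Q} : MProp.isStrong P → TJ Γ t P → TJ Γ s P.opp → TJ Γ (.abs Q t s) Q
  | pairP {Γ t s A B} : TJ Γ t (MProp.cp A) → TJ Γ s (MProp.cp B) →
      TJ Γ (.pair .pos t s) (MProp.sp (PureProp.conj A B))
  | pairN {Γ t s A B} : TJ Γ t (MProp.cn A) → TJ Γ s (MProp.cn B) →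
      TJ Γ (.pair .neg t s) (MProp.sn (PureProp.disj A B))
  | projP1 {Γ t A B} : TJ Γ t (MProp.sp (PureProp.conj A B)) → TJ Γ (.proj .pos false t) (MProp.cp A)
  | projP2 {Γ t A B} : TJ Γ t (MProp.sp (PureProp.conj A B)) → TJ Γ (.proj .pos true t) (MProp.cp B)
  | projN1 {Γ t A B} : TJ Γ t (MProp.sn (PureProp.disj A B)) → TJ Γ (.proj .neg false t) (MProp.cn A)
  | projN2 {Γ t A B} : TJ Γ t (MProp.sn (PureProp.disj A B)) → TJ Γ (.proj .neg true t) (MProp.cn B)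
  | injP1 {Γ t A B} : TJ Γ t (MProp.cp A) → TJ Γ (.inj .pos false t) (MProp.sp (PureProp.disj A B))
  | injP2 {Γ t A B} : TJ Γ t (MProp.cp B) → TJ Γ (.inj .pos true t) (MProp.sp (PureProp.disj A B))
  | injN1 {Γ t A B} : TJ Γ t (MProp.cn A) → TJ Γ (.inj .neg false t) (MProp.sn (PureProp.conj A B))
  | injN2 {Γ t A B} : TJ Γ t (MProp.cn B) → TJ Γ (.inj .neg true t) (MProp.sn (PureProp.conj A B))
  | caseP {Γ t s u A B P} : TJ Γ t (MProp.sp (PureProp.disj A B)) →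
      TJ (MProp.cp A :: Γ) s P → TJ (MProp.cp B :: Γ) u P →
      TJ Γ (.case .pos t (MProp.cp A) s (MProp.cp B) u) P
  | caseN {Γ t s u A B P} : TJ Γ t (MProp.sn (PureProp.conj A B)) →
      TJ (MProp.cn A :: Γ) s P → TJ (MProp.cn B :: Γ) u P →
      TJ Γ (.case .neg t (MProp.cn A) s (MProp.cn B) u) P
  | negiP {Γ t A} : TJ Γ t (MProp.cn A) → TJ Γ (.negi .pos t) (MProp.sp (PureProp.neg A))
  | negiN {Γ t A} : TJ Γ t (MProp.cp A) → TJ Γ (.negi .neg t) (MProp.sn (PureProp.neg A))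
  | negeP {Γ t A} : TJ Γ t (MProp.sp (PureProp.neg A)) → TJ Γ (.nege .pos t) (MProp.cn A)
  | negeN {Γ t A} : TJ Γ t (MProp.sn (PureProp.neg A)) → TJ Γ (.nege .neg t) (MProp.cp A)
  | lamP {Γ t A} : TJ (MProp.cn A :: Γ) t (MProp.sp A) → TJ Γ (.lam .pos (MProp.cn A) t) (MProp.cp A)
  | lamN {Γ t A} : TJ (MProp.cp A :: Γ) t (MProp.sn A) → TJ Γ (.lam .neg (MProp.cp A) t) (MProp.cn A)
  | appP {Γ t s A} : TJ Γ t (MProp.cp A) → TJ Γ s (MProp.cn A) → TJ Γ (.app .pos t s) (MProp.sp A)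
  | appN {Γ t s A} : TJ Γ t (MProp.cn A) → TJ Γ s (MProp.cp A) → TJ Γ (.app .neg t s) (MProp.sn A)

/-- Weakening: a type `R` may be inserted at any position of the context. -/
theorem TJ.shift {Γ Δ : List MProp} {R P : MProp} {t : Tm} (h : TJ (Δ ++ Γ) t P) :
    TJ (Δ ++ R :: Γ) (Tm.shift 1 Δ.length t) P := by
  generalize hE : Δ ++ Γ = E at h
  induction h generalizing Δ with
  | @var E n P hn =>
    subst hE
    simp only [Tm.shift]
    split_ifs with hlt
    · apply TJ.var
      rwa [List.getElem?_append_left hlt] at hn ⊢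
    · apply TJ.var
      have hle : Δ.length ≤ n := Nat.le_of_not_lt hlt
      rw [List.getElem?_append_right hle] at hn
      rw [List.getElem?_append_right (by omega), Nat.sub_add_comm hle, List.getElem?_cons_succ]
      exact hn
  | absT hP _ _ ih₁ ih₂ => exact .absT hP (ih₁ hE) (ih₂ hE)
  | pairP _ _ ih₁ ih₂ => exact .pairP (ih₁ hE) (ih₂ hE)
  | pairN _ _ ih₁ ih₂ => exact .pairN (ih₁ hE) (ih₂ hE)
  | projP1 _ ih => exact .projP1 (ih hE)
  | projP2 _ ih => exact .projP2 (ih hE)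
  | projN1 _ ih => exact .projN1 (ih hE)
  | projN2 _ ih => exact .projN2 (ih hE)
  | injP1 _ ih => exact .injP1 (ih hE)
  | injP2 _ ih => exact .injP2 (ih hE)
  | injN1 _ ih => exact .injN1 (ih hE)
  | injN2 _ ih => exact .injN2 (ih hE)
  | @caseP _ _ _ _ A B _ _ _ _ ih₁ ih₂ ih₃ =>
    exact .caseP (ih₁ hE) (ih₂ (Δ := .cp A :: Δ) (by simp [hE])) (ih₃ (Δ := .cp B :: Δ) (by simp [hE]))
  | @caseN _ _ _ _ A B _ _ _ _ ih₁ ih₂ ih₃ =>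
    exact .caseN (ih₁ hE) (ih₂ (Δ := .cn A :: Δ) (by simp [hE])) (ih₃ (Δ := .cn B :: Δ) (by simp [hE]))
  | negiP _ ih => exact .negiP (ih hE)
  | negiN _ ih => exact .negiN (ih hE)
  | negeP _ ih => exact .negeP (ih hE)
  | negeN _ ih => exact .negeN (ih hE)
  | @lamP _ _ A _ ih => exact .lamP (ih (Δ := .cn A :: Δ) (by simp [hE]))
  | @lamN _ _ A _ ih => exact .lamN (ih (Δ := .cp A :: Δ) (by simp [hE]))
  | appP _ _ ih₁ ih₂ => exact .appP (ih₁ hE) (ih₂ hE)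
  | appN _ _ ih₁ ih₂ => exact .appN (ih₁ hE) (ih₂ hE)

/-- Substitution lemma at an arbitrary position of the context. The substituted term is typed in
the full remaining context `Δ ++ Γ`, matching `Tm.subst`, which shifts it at each binder crossed. -/
theorem TJ.subst {Γ Δ : List MProp} {R P : MProp} {t s : Tm} (h : TJ (Δ ++ R :: Γ) t P)
    (hs : TJ (Δ ++ Γ) s R) : TJ (Δ ++ Γ) (Tm.subst t Δ.length s) P := by
  generalize hE : Δ ++ R :: Γ = E at h
  induction h generalizing Δ s with
  | @var E n P hn =>
    subst hE
    simp only [Tm.subst]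
    split_ifs with heq hlt
    · subst heq
      have hRP : R = P := by simpa using hn
      exact hRP ▸ hs
    · apply TJ.var
      -- Here `n = m + 1` with `m` at or beyond position `Δ.length`, so `n - 1` is not truncated.
      obtain ⟨m, rfl⟩ : ∃ m, n = m + 1 := ⟨n - 1, by omega⟩
      have hle : Δ.length ≤ m := by omega
      rw [List.getElem?_append_right (by omega), Nat.sub_add_comm hle,
        List.getElem?_cons_succ] at hn
      rw [Nat.add_sub_cancel, List.getElem?_append_right hle]
      exact hn
    · apply TJ.var
      have hn' : n < Δ.length := by omega
      rwa [List.getElem?_append_left hn'] at hn ⊢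
  | absT hP _ _ ih₁ ih₂ => exact .absT hP (ih₁ hs hE) (ih₂ hs hE)
  | pairP _ _ ih₁ ih₂ => exact .pairP (ih₁ hs hE) (ih₂ hs hE)
  | pairN _ _ ih₁ ih₂ => exact .pairN (ih₁ hs hE) (ih₂ hs hE)
  | projP1 _ ih => exact .projP1 (ih hs hE)
  | projP2 _ ih => exact .projP2 (ih hs hE)
  | projN1 _ ih => exact .projN1 (ih hs hE)
  | projN2 _ ih => exact .projN2 (ih hs hE)
  | injP1 _ ih => exact .injP1 (ih hs hE)
  | injP2 _ ih => exact .injP2 (ih hs hE)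
  | injN1 _ ih => exact .injN1 (ih hs hE)
  | injN2 _ ih => exact .injN2 (ih hs hE)
  | @caseP _ _ _ _ A B _ _ _ _ ih₁ ih₂ ih₃ =>
    exact .caseP (ih₁ hs hE)
      (ih₂ (Δ := .cp A :: Δ) (TJ.shift (Δ := []) hs) (by simp [hE]))
      (ih₃ (Δ := .cp B :: Δ) (TJ.shift (Δ := []) hs) (by simp [hE]))
  | @caseN _ _ _ _ A B _ _ _ _ ih₁ ih₂ ih₃ =>
    exact .caseN (ih₁ hs hE)
      (ih₂ (Δ := .cn A :: Δ) (TJ.shift (Δ := []) hs) (by simp [hE]))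
      (ih₃ (Δ := .cn B :: Δ) (TJ.shift (Δ := []) hs) (by simp [hE]))
  | negiP _ ih => exact .negiP (ih hs hE)
  | negiN _ ih => exact .negiN (ih hs hE)
  | negeP _ ih => exact .negeP (ih hs hE)
  | negeN _ ih => exact .negeN (ih hs hE)
  | @lamP _ _ A _ ih =>
    exact .lamP (ih (Δ := .cn A :: Δ) (TJ.shift (Δ := []) hs) (by simp [hE]))
  | @lamN _ _ A _ ih =>
    exact .lamN (ih (Δ := .cp A :: Δ) (TJ.shift (Δ := []) hs) (by simp [hE]))
  | appP _ _ ih₁ ih₂ => exact .appP (ih₁ hs hE) (ih₂ hs hE)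
  | appN _ _ ih₁ ih₂ => exact .appN (ih₁ hs hE) (ih₂ hs hE)

/-- The substitution lemma for the most recently bound variable. -/
theorem TJ.subst_zero {Γ : List MProp} {R P : MProp} {t s : Tm} (h : TJ (R :: Γ) t P)
    (hs : TJ Γ s R) : TJ Γ (Tm.subst t 0 s) P :=
  TJ.subst (Δ := []) h hs

theorem TJ.absE_pos {Γ : List MProp} {A : PureProp} {Q : MProp} {t s : Tm}
    (ht : TJ Γ t (.cp A)) (hs : TJ Γ s (.cn A)) : TJ Γ (absE Q .pos t s) Q :=
  .absT (P := .sp A) trivial (.appP ht hs) (.appN hs ht)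

theorem TJ.absE_neg {Γ : List MProp} {A : PureProp} {Q : MProp} {t s : Tm}
    (ht : TJ Γ t (.cn A)) (hs : TJ Γ s (.cp A)) : TJ Γ (absE Q .neg t s) Q :=
  .absT (P := .sn A) trivial (.appN ht hs) (.appP hs ht)

/-- Subject reduction for λPRK. -/
theorem subject_reduction {Γ : List MProp} {t s : Tm} {P : MProp}
    (ht : TJ Γ t P) (hr : Red t s) : TJ Γ s P := by
  induction hr generalizing Γ P with
  | proj1 | proj2 | negRed =>
    cases ht <;> rename_i h <;> cases h <;> assumption
  | case1 =>
    cases ht <;> rename_i h _ _ <;> cases h <;> exact TJ.subst_zero ‹_› ‹_›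
  | case2 =>
    cases ht <;> rename_i h _ _ <;> cases h <;> exact TJ.subst_zero ‹_› ‹_›
  | beta =>
    cases ht <;> rename_i h _ <;> cases h <;> exact TJ.subst_zero ‹_› ‹_›
  | @absPairInj1 _ sg | @absPairInj2 _ sg | @absInjPair1 _ sg | @absInjPair2 _ sg | @absNeg _ sg =>
    cases ht with
    | absT _ h₁ h₂ =>
      -- Fixing the sign makes `sg.flip` compute; inverting `h₁` determines the strong type, hence
      -- also the opposite type that `h₂` assigns.
      cases sg <;> cases h₁ <;> cases h₂ <;>
        first | exact TJ.absE_pos ‹_› ‹_› | exact TJ.absE_neg ‹_› ‹_›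
  | absCL _ ih => cases ht with | absT hP h₁ h₂ => exact .absT hP (ih h₁) h₂
  | absCR _ ih => cases ht with | absT hP h₁ h₂ => exact .absT hP h₁ (ih h₂)
  | pairCL _ ih =>
    cases ht with
    | pairP h₁ h₂ => exact .pairP (ih h₁) h₂
    | pairN h₁ h₂ => exact .pairN (ih h₁) h₂
  | pairCR _ ih =>
    cases ht with
    | pairP h₁ h₂ => exact .pairP h₁ (ih h₂)
    | pairN h₁ h₂ => exact .pairN h₁ (ih h₂)
  | projC _ ih =>
    cases ht with
    | projP1 h => exact .projP1 (ih h)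
    | projP2 h => exact .projP2 (ih h)
    | projN1 h => exact .projN1 (ih h)
    | projN2 h => exact .projN2 (ih h)
  | injC _ ih =>
    cases ht with
    | injP1 h => exact .injP1 (ih h)
    | injP2 h => exact .injP2 (ih h)
    | injN1 h => exact .injN1 (ih h)
    | injN2 h => exact .injN2 (ih h)
  | caseC1 _ ih =>
    cases ht with
    | caseP h₁ h₂ h₃ => exact .caseP (ih h₁) h₂ h₃
    | caseN h₁ h₂ h₃ => exact .caseN (ih h₁) h₂ h₃
  | caseC2 _ ih =>
    cases ht with
    | caseP h₁ h₂ h₃ => exact .caseP h₁ (ih h₂) h₃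
    | caseN h₁ h₂ h₃ => exact .caseN h₁ (ih h₂) h₃
  | caseC3 _ ih =>
    cases ht with
    | caseP h₁ h₂ h₃ => exact .caseP h₁ h₂ (ih h₃)
    | caseN h₁ h₂ h₃ => exact .caseN h₁ h₂ (ih h₃)
  | negiC _ ih =>
    cases ht with
    | negiP h => exact .negiP (ih h)
    | negiN h => exact .negiN (ih h)
  | negeC _ ih =>
    cases ht with
    | negeP h => exact .negeP (ih h)
    | negeN h => exact .negeN (ih h)
  | lamC _ ih =>
    cases ht with
    | lamP h => exact .lamP (ih h)
    | lamN h => exact .lamN (ih h)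
  | appCL _ ih =>
    cases ht with
    | appP h₁ h₂ => exact .appP (ih h₁) h₂
    | appN h₁ h₂ => exact .appN (ih h₁) h₂
  | appCR _ ih =>
    cases ht with
    | appP h₁ h₂ => exact .appP h₁ (ih h₂)
    | appN h₁ h₂ => exact .appN h₁ (ih h₂)
end

section
/- Confluence of λPRK: the reduction relation → of λPRK is confluent, i.e., if t →* t₁ and t →* t₂ then there exists t₃ with t₁ →* t₃ and t₂ →* t₃. -/
/-! ### Shifting and substitution -/

namespace Tm

theorem shift_shift (t : Tm) : ∀ c e, c ≤ e →
    shift 1 c (shift 1 e t) = shift 1 (e + 1) (shift 1 c t) := by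
  induction t with
  | var k =>
    intro c e h
    simp only [shift]
    split_ifs <;> simp only [shift] <;> split_ifs <;> first | rfl | omega
  | _ => intro c e h; simp only [shift]; grind

/-- Substitution below the cutoff of a shift. -/
theorem shift_subst_le (t : Tm) : ∀ c j s, j ≤ c →
    shift 1 c (subst t j s) = subst (shift 1 (c + 1) t) j (shift 1 c s) := by
  induction t with
  | var k =>
    intro c j s h
    simp only [shift, subst]
    split_ifs <;> simp only [shift, subst] <;> split_ifs <;>
      first | rfl | omega | (congr 1; omega)
  | _ => intro c j s h; simp only [shift, subst]; grind [shift_shift]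

/-- Substitution above the cutoff of a shift. -/
theorem shift_subst_ge (t : Tm) : ∀ c j s, c ≤ j →
    shift 1 c (subst t j s) = subst (shift 1 c t) (j + 1) (shift 1 c s) := by
  induction t with
  | var k =>
    intro c j s h
    simp only [shift, subst]
    split_ifs <;> simp only [shift, subst] <;> split_ifs <;>
      first | rfl | omega | (congr 1; omega)
  | _ => intro c j s h; simp only [shift, subst]; grind [shift_shift]

theorem subst_shift_cancel (t : Tm) : ∀ j s, subst (shift 1 j t) j s = t := by
  induction t with
  | var k =>
    intro j s
    simp only [shift]
    split_ifs <;> simp only [subst] <;> split_ifs <;>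
      first | rfl | omega
  | _ => intro j s; simp only [shift, subst]; grind

/-- The substitution lemma. -/
theorem subst_subst (t : Tm) : ∀ i j s u, i ≤ j →
    subst (subst t i s) j u = subst (subst t (j + 1) (shift 1 i u)) i (subst s j u) := by
  induction t with
  | var k =>
    intro i j s u h
    rcases lt_trichotomy k i with hk | rfl | hk
    · simp [subst, show k ≠ i by omega, show ¬ i < k by omega, show k ≠ j by omega,
        show ¬ j < k by omega, show k ≠ j + 1 by omega, show ¬ j + 1 < k by omega]
    · simp [subst, show k ≠ j + 1 by omega, show ¬ j + 1 < k by omega]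
    · by_cases hj : k = j + 1
      · subst hj
        simp [subst, subst_shift_cancel, show j + 1 ≠ i by omega, show i < j + 1 by omega]
      · by_cases hj' : j + 1 < k
        · simp [subst, show k ≠ i by omega, hk, show k - 1 ≠ j by omega,
            show j < k - 1 by omega, hj, hj', show k - 1 ≠ i by omega, show i < k - 1 by omega]
        · simp [subst, show k ≠ i by omega, hk, show k - 1 ≠ j by omega,
            show ¬ j < k - 1 by omega, hj, hj']
  | _ => intro i j s u h; simp only [subst]; grind [shift_shift, shift_subst_ge]

end Tm

/-! ### Parallel reduction -/

/-- Parallel reduction: simultaneous contraction of any set of redexes present in a term. The rules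
that come in pairs indexed by a component `i ∈ {1, 2}` are merged, the component being selected by
a Boolean `b`. -/
inductive Par : Tm → Tm → Prop
  | var {k} : Par (.var k) (.var k)
  | abs {Q t t' s s'} : Par t t' → Par s s' → Par (.abs Q t s) (.abs Q t' s')
  | pair {sg t t' s s'} : Par t t' → Par s s' → Par (.pair sg t s) (.pair sg t' s')
  | proj {sg i t t'} : Par t t' → Par (.proj sg i t) (.proj sg i t')
  | inj {sg i t t'} : Par t t' → Par (.inj sg i t) (.inj sg i t')
  | case {sg t t' P s s' Q u u'} : Par t t' → Par s s' → Par u u' →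
      Par (.case sg t P s Q u) (.case sg t' P s' Q u')
  | negi {sg t t'} : Par t t' → Par (.negi sg t) (.negi sg t')
  | nege {sg t t'} : Par t t' → Par (.nege sg t) (.nege sg t')
  | lam {sg P t t'} : Par t t' → Par (.lam sg P t) (.lam sg P t')
  | app {sg t t' s s'} : Par t t' → Par s s' → Par (.app sg t s) (.app sg t' s')
  | projR {sg b t t' s s'} : Par t t' → Par s s' →
      Par (.proj sg b (.pair sg t s)) (bif b then s' else t')
  | caseR {sg b t t' P s s' Q u u'} : Par t t' → Par s s' → Par u u' →
      Par (.case sg (.inj sg b t) P s Q u) (Tm.subst (bif b then u' else s') 0 t')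
  | negR {sg t t'} : Par t t' → Par (.nege sg (.negi sg t)) t'
  | beta {sg P t t' s s'} : Par t t' → Par s s' →
      Par (.app sg (.lam sg P t) s) (Tm.subst t' 0 s')
  | absPI {Q sg b t t' s s' u u'} : Par t t' → Par s s' → Par u u' →
      Par (.abs Q (.pair sg t s) (.inj sg.flip b u)) (absE Q sg (bif b then s' else t') u')
  | absIP {Q sg b t t' s s' u u'} : Par t t' → Par s s' → Par u u' →
      Par (.abs Q (.inj sg b u) (.pair sg.flip t s)) (absE Q sg u' (bif b then s' else t'))
  | absN {Q sg t t' s s'} : Par t t' → Par s s' →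
      Par (.abs Q (.negi sg t) (.negi sg.flip s)) (absE Q sg.flip t' s')

namespace Par

theorem refl (t : Tm) : Par t t := by
  induction t <;> constructor <;> assumption

theorem absE {Q sg t t' s s'} (h : Par t t') (h' : Par s s') :
    Par (absE Q sg t s) (absE Q sg t' s') :=
  .abs (.app h h') (.app h' h)

theorem cond {b t t' s s'} (h : Par t t') (h' : Par s s') :
    Par (bif b then s else t) (bif b then s' else t') := by
  cases b <;> assumption

theorem shift {t t' : Tm} (h : Par t t') : ∀ c, Par (t.shift 1 c) (t'.shift 1 c) := by
  induction h with
  | @var k => intro c; exact refl _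
  | projR _ _ h1 h2 =>
    intro c; rw [Bool.apply_cond (Tm.shift 1 c)]; exact .projR (h1 c) (h2 c)
  | caseR _ _ _ h1 h2 h3 =>
    intro c
    rw [Tm.shift_subst_le _ _ _ _ (Nat.zero_le c), Bool.apply_cond (Tm.shift 1 (c + 1))]
    exact .caseR (h1 c) (h2 _) (h3 _)
  | negR _ h1 => intro c; exact .negR (h1 c)
  | beta _ _ h1 h2 =>
    intro c
    rw [Tm.shift_subst_le _ _ _ _ (Nat.zero_le c)]
    exact .beta (h1 _) (h2 c)
  | absPI _ _ _ h1 h2 h3 =>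
    intro c
    simp only [_root_.absE, Tm.shift]
    rw [Bool.apply_cond (Tm.shift 1 c)]
    exact .absPI (h1 c) (h2 c) (h3 c)
  | absIP _ _ _ h1 h2 h3 =>
    intro c
    simp only [_root_.absE, Tm.shift]
    rw [Bool.apply_cond (Tm.shift 1 c)]
    exact .absIP (h1 c) (h2 c) (h3 c)
  | absN _ _ h1 h2 => intro c; exact .absN (h1 c) (h2 c)
  | _ => intro c; constructor <;> apply_assumption

theorem subst {t t' : Tm} (h : Par t t') :
    ∀ {j} {s s' : Tm}, Par s s' → Par (t.subst j s) (t'.subst j s') := by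
  induction h with
  | @var k =>
    intro j s s' hs
    simp only [Tm.subst]
    split_ifs
    exacts [hs, .var, .var]
  | projR _ _ h1 h2 =>
    intro j s s' hs
    rw [Bool.apply_cond (fun x => Tm.subst x j s')]
    exact .projR (h1 hs) (h2 hs)
  | caseR _ _ _ h1 h2 h3 =>
    intro j s s' hs
    rw [Tm.subst_subst _ _ _ _ _ (Nat.zero_le j),
      Bool.apply_cond (fun x => Tm.subst x (j + 1) (Tm.shift 1 0 s'))]
    exact .caseR (h1 hs) (h2 (hs.shift 0)) (h3 (hs.shift 0))
  | negR _ h1 => intro j s s' hs; exact .negR (h1 hs)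
  | beta _ _ h1 h2 =>
    intro j s s' hs
    rw [Tm.subst_subst _ _ _ _ _ (Nat.zero_le j)]
    exact .beta (h1 (hs.shift 0)) (h2 hs)
  | absPI _ _ _ h1 h2 h3 =>
    intro j s s' hs
    simp only [_root_.absE, Tm.subst]
    rw [Bool.apply_cond (fun x => Tm.subst x j s')]
    exact .absPI (h1 hs) (h2 hs) (h3 hs)
  | absIP _ _ _ h1 h2 h3 =>
    intro j s s' hs
    simp only [_root_.absE, Tm.subst]
    rw [Bool.apply_cond (fun x => Tm.subst x j s')]
    exact .absIP (h1 hs) (h2 hs) (h3 hs)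
  | absN _ _ h1 h2 => intro j s s' hs; exact .absN (h1 hs) (h2 hs)
  | lam _ h1 => intro j s s' hs; exact .lam (h1 (hs.shift 0))
  | case _ _ _ h1 h2 h3 =>
    intro j s s' hs; exact .case (h1 hs) (h2 (hs.shift 0)) (h3 (hs.shift 0))
  | _ => intro j s s' hs; constructor <;> apply_assumption <;> exact hs

/-! ### Complete developments -/

/-- `d` is a complete development of `t`: it is reached in one parallel step from every parallel
reduct of `t`. -/
def Complete (t d : Tm) : Prop := ∀ t', Par t t' → Par t' d

theorem Complete.pair_inv {sg t s d} (h : Complete (.pair sg t s) d) :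
    ∃ d1 d2, d = .pair sg d1 d2 ∧ Complete t d1 ∧ Complete s d2 := by
  have h0 := h _ (refl _)
  cases h0 with
  | pair h1 h2 =>
    refine ⟨_, _, rfl, fun t' ht => ?_, fun s' hs => ?_⟩
    · cases h _ (.pair ht (refl s)); assumption
    · cases h _ (.pair (refl t) hs); assumption

theorem Complete.inj_inv {sg b t d} (h : Complete (.inj sg b t) d) :
    ∃ d1, d = .inj sg b d1 ∧ Complete t d1 := by
  have h0 := h _ (refl _)
  cases h0 with
  | inj h1 =>
    refine ⟨_, rfl, fun t' ht => ?_⟩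
    cases h _ (.inj ht); assumption

theorem Complete.negi_inv {sg t d} (h : Complete (.negi sg t) d) :
    ∃ d1, d = .negi sg d1 ∧ Complete t d1 := by
  have h0 := h _ (refl _)
  cases h0 with
  | negi h1 =>
    refine ⟨_, rfl, fun t' ht => ?_⟩
    cases h _ (.negi ht); assumption

theorem Complete.lam_inv {sg P t d} (h : Complete (.lam sg P t) d) :
    ∃ d1, d = .lam sg P d1 ∧ Complete t d1 := by
  have h0 := h _ (refl _)
  cases h0 with
  | lam h1 =>
    refine ⟨_, rfl, fun t' ht => ?_⟩
    cases h _ (.lam ht); assumption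

theorem exists_complete (t : Tm) : ∃ d, Complete t d := by
  induction t with
  | var k => exact ⟨.var k, fun t' h => by cases h; exact .var⟩
  | pair sg t s iht ihs =>
    obtain ⟨d, hd⟩ := iht
    obtain ⟨e, he⟩ := ihs
    exact ⟨.pair sg d e, fun t' h => by cases h with | pair h1 h2 => exact .pair (hd _ h1) (he _ h2)⟩
  | inj sg b t iht =>
    obtain ⟨d, hd⟩ := iht
    exact ⟨.inj sg b d, fun t' h => by cases h with | inj h1 => exact .inj (hd _ h1)⟩
  | negi sg t iht =>
    obtain ⟨d, hd⟩ := iht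
    exact ⟨.negi sg d, fun t' h => by cases h with | negi h1 => exact .negi (hd _ h1)⟩
  | lam sg P t iht =>
    obtain ⟨d, hd⟩ := iht
    exact ⟨.lam sg P d, fun t' h => by cases h with | lam h1 => exact .lam (hd _ h1)⟩
  | proj sg b t iht =>
    obtain ⟨d, hd⟩ := iht
    by_cases hr : ∃ t1 t2, t = .pair sg t1 t2
    · obtain ⟨t1, t2, rfl⟩ := hr
      obtain ⟨d1, d2, rfl, hd1, hd2⟩ := hd.pair_inv
      refine ⟨bif b then d2 else d1, fun t' h => ?_⟩
      cases h with
      | proj h =>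
        cases h with
        | pair h1 h2 => exact .projR (hd1 _ h1) (hd2 _ h2)
      | projR h1 h2 => exact .cond (hd1 _ h1) (hd2 _ h2)
    · refine ⟨.proj sg b d, fun t' h => ?_⟩
      cases h with
      | proj h => exact .proj (hd _ h)
      | projR h1 h2 => exact absurd ⟨_, _, rfl⟩ hr
  | case sg t P s Q u iht ihs ihu =>
    obtain ⟨d, hd⟩ := iht
    obtain ⟨e, he⟩ := ihs
    obtain ⟨f, hf⟩ := ihu
    by_cases hr : ∃ b t1, t = .inj sg b t1
    · obtain ⟨b, t1, rfl⟩ := hr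
      obtain ⟨d1, rfl, hd1⟩ := hd.inj_inv
      refine ⟨Tm.subst (bif b then f else e) 0 d1, fun t' h => ?_⟩
      cases h with
      | case h h2 h3 =>
        cases h with
        | inj h1 => exact .caseR (hd1 _ h1) (he _ h2) (hf _ h3)
      | caseR h1 h2 h3 => exact .subst (.cond (he _ h2) (hf _ h3)) (hd1 _ h1)
    · refine ⟨.case sg d P e Q f, fun t' h => ?_⟩
      cases h with
      | case h1 h2 h3 => exact .case (hd _ h1) (he _ h2) (hf _ h3)
      | caseR h1 h2 h3 => exact absurd ⟨_, _, rfl⟩ hr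
  | nege sg t iht =>
    obtain ⟨d, hd⟩ := iht
    by_cases hr : ∃ t1, t = .negi sg t1
    · obtain ⟨t1, rfl⟩ := hr
      obtain ⟨d1, rfl, hd1⟩ := hd.negi_inv
      refine ⟨d1, fun t' h => ?_⟩
      cases h with
      | nege h =>
        cases h with
        | negi h1 => exact .negR (hd1 _ h1)
      | negR h1 => exact hd1 _ h1
    · refine ⟨.nege sg d, fun t' h => ?_⟩
      cases h with
      | nege h => exact .nege (hd _ h)
      | negR h1 => exact absurd ⟨_, rfl⟩ hr
  | app sg t s iht ihs =>
    obtain ⟨d, hd⟩ := iht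
    obtain ⟨e, he⟩ := ihs
    by_cases hr : ∃ P t1, t = .lam sg P t1
    · obtain ⟨P, t1, rfl⟩ := hr
      obtain ⟨d1, rfl, hd1⟩ := hd.lam_inv
      refine ⟨Tm.subst d1 0 e, fun t' h => ?_⟩
      cases h with
      | app h h2 =>
        cases h with
        | lam h1 => exact .beta (hd1 _ h1) (he _ h2)
      | beta h1 h2 => exact .subst (hd1 _ h1) (he _ h2)
    · refine ⟨.app sg d e, fun t' h => ?_⟩
      cases h with
      | app h1 h2 => exact .app (hd _ h1) (he _ h2)
      | beta h1 h2 => exact absurd ⟨_, _, rfl⟩ hr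
  | abs Q t s iht ihs =>
    obtain ⟨d, hd⟩ := iht
    obtain ⟨e, he⟩ := ihs
    by_cases hPI : ∃ sg b t1 t2 s1, t = .pair sg t1 t2 ∧ s = .inj sg.flip b s1
    · obtain ⟨sg, b, t1, t2, s1, rfl, rfl⟩ := hPI
      obtain ⟨d1, d2, rfl, hd1, hd2⟩ := hd.pair_inv
      obtain ⟨e1, rfl, he1⟩ := he.inj_inv
      refine ⟨_root_.absE Q sg (bif b then d2 else d1) e1, fun t' h => ?_⟩
      cases h with
      | abs h h' =>
        cases h with
        | pair h1 h2 =>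
          cases h' with
          | inj h3 => exact .absPI (hd1 _ h1) (hd2 _ h2) (he1 _ h3)
      | absPI h1 h2 h3 => exact .absE (.cond (hd1 _ h1) (hd2 _ h2)) (he1 _ h3)
    by_cases hIP : ∃ sg b t1 s1 s2, t = .inj sg b t1 ∧ s = .pair sg.flip s1 s2
    · obtain ⟨sg, b, t1, s1, s2, rfl, rfl⟩ := hIP
      obtain ⟨d1, rfl, hd1⟩ := hd.inj_inv
      obtain ⟨e1, e2, rfl, he1, he2⟩ := he.pair_inv
      refine ⟨_root_.absE Q sg d1 (bif b then e2 else e1), fun t' h => ?_⟩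
      cases h with
      | abs h h' =>
        cases h with
        | inj h3 =>
          cases h' with
          | pair h1 h2 => exact .absIP (he1 _ h1) (he2 _ h2) (hd1 _ h3)
      | absIP h1 h2 h3 => exact .absE (hd1 _ h3) (.cond (he1 _ h1) (he2 _ h2))
    by_cases hN : ∃ sg t1 s1, t = .negi sg t1 ∧ s = .negi sg.flip s1
    · obtain ⟨sg, t1, s1, rfl, rfl⟩ := hN
      obtain ⟨d1, rfl, hd1⟩ := hd.negi_inv
      obtain ⟨e1, rfl, he1⟩ := he.negi_inv
      refine ⟨_root_.absE Q sg.flip d1 e1, fun t' h => ?_⟩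
      cases h with
      | abs h h' =>
        cases h with
        | negi h1 =>
          cases h' with
          | negi h2 => exact .absN (hd1 _ h1) (he1 _ h2)
      | absN h1 h2 => exact .absE (hd1 _ h1) (he1 _ h2)
    refine ⟨.abs Q d e, fun t' h => ?_⟩
    cases h with
    | abs h1 h2 => exact .abs (hd _ h1) (he _ h2)
    | absPI => exact absurd ⟨_, _, _, _, _, rfl, rfl⟩ hPI
    | absIP => exact absurd ⟨_, _, _, _, _, rfl, rfl⟩ hIP
    | absN => exact absurd ⟨_, _, _, rfl, rfl⟩ hN

end Par

/-! ### Comparison with one-step reduction -/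

theorem Red.par {t t' : Tm} (h : Red t t') : Par t t' := by
  induction h with
  | proj1 => exact .projR (b := false) (.refl _) (.refl _)
  | proj2 => exact .projR (b := true) (.refl _) (.refl _)
  | case1 => exact .caseR (b := false) (.refl _) (.refl _) (.refl _)
  | case2 => exact .caseR (b := true) (.refl _) (.refl _) (.refl _)
  | negRed => exact .negR (.refl _)
  | beta => exact .beta (.refl _) (.refl _)
  | absPairInj1 => exact .absPI (b := false) (.refl _) (.refl _) (.refl _)
  | absPairInj2 => exact .absPI (b := true) (.refl _) (.refl _) (.refl _)
  | absInjPair1 => exact .absIP (b := false) (.refl _) (.refl _) (.refl _)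
  | absInjPair2 => exact .absIP (b := true) (.refl _) (.refl _) (.refl _)
  | absNeg => exact .absN (.refl _) (.refl _)
  | _ => constructor <;> first | assumption | exact .refl _

namespace RedStar

theorem refl (t : Tm) : RedStar t t := Relation.ReflTransGen.refl

theorem abs {Q t t' s s'} (h : RedStar t t') (h' : RedStar s s') :
    RedStar (.abs Q t s) (.abs Q t' s') :=
  (h.lift (Tm.abs Q · s) fun _ _ => Red.absCL).trans (h'.lift (Tm.abs Q t') fun _ _ => Red.absCR)

theorem pair {sg t t' s s'} (h : RedStar t t') (h' : RedStar s s') :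
    RedStar (.pair sg t s) (.pair sg t' s') :=
  (h.lift (Tm.pair sg · s) fun _ _ => Red.pairCL).trans
    (h'.lift (Tm.pair sg t') fun _ _ => Red.pairCR)

theorem app {sg t t' s s'} (h : RedStar t t') (h' : RedStar s s') :
    RedStar (.app sg t s) (.app sg t' s') :=
  (h.lift (Tm.app sg · s) fun _ _ => Red.appCL).trans (h'.lift (Tm.app sg t') fun _ _ => Red.appCR)

theorem proj {sg i t t'} (h : RedStar t t') : RedStar (.proj sg i t) (.proj sg i t') :=
  h.lift (Tm.proj sg i) fun _ _ => Red.projC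

theorem inj {sg i t t'} (h : RedStar t t') : RedStar (.inj sg i t) (.inj sg i t') :=
  h.lift (Tm.inj sg i) fun _ _ => Red.injC

theorem negi {sg t t'} (h : RedStar t t') : RedStar (.negi sg t) (.negi sg t') :=
  h.lift (Tm.negi sg) fun _ _ => Red.negiC

theorem nege {sg t t'} (h : RedStar t t') : RedStar (.nege sg t) (.nege sg t') :=
  h.lift (Tm.nege sg) fun _ _ => Red.negeC

theorem lam {sg P t t'} (h : RedStar t t') : RedStar (.lam sg P t) (.lam sg P t') :=
  h.lift (Tm.lam sg P) fun _ _ => Red.lamC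

theorem case {sg t t' P s s' Q u u'} (h : RedStar t t') (h' : RedStar s s') (h'' : RedStar u u') :
    RedStar (.case sg t P s Q u) (.case sg t' P s' Q u') :=
  ((h.lift (Tm.case sg · P s Q u) fun _ _ => Red.caseC1).trans
    (h'.lift (Tm.case sg t' P · Q u) fun _ _ => Red.caseC2)).trans
    (h''.lift (Tm.case sg t' P s' Q ·) fun _ _ => Red.caseC3)

end RedStar

theorem Par.redStar {t t' : Tm} (h : Par t t') : RedStar t t' := by
  induction h with
  | var => exact .refl _
  | abs _ _ h1 h2 => exact .abs h1 h2
  | pair _ _ h1 h2 => exact .pair h1 h2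
  | proj _ h1 => exact .proj h1
  | inj _ h1 => exact .inj h1
  | case _ _ _ h1 h2 h3 => exact .case h1 h2 h3
  | negi _ h1 => exact .negi h1
  | nege _ h1 => exact .nege h1
  | lam _ h1 => exact .lam h1
  | app _ _ h1 h2 => exact .app h1 h2
  | @projR sg b t t' s s' _ _ h1 h2 =>
    refine Relation.ReflTransGen.tail (RedStar.proj (.pair h1 h2)) ?_
    cases b
    exacts [.proj1, .proj2]
  | @caseR sg b t t' P s s' Q u u' _ _ _ h1 h2 h3 =>
    refine Relation.ReflTransGen.tail (RedStar.case (.inj h1) h2 h3) ?_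
    cases b
    exacts [.case1, .case2]
  | negR _ h1 => exact Relation.ReflTransGen.tail (RedStar.nege (.negi h1)) .negRed
  | beta _ _ h1 h2 => exact Relation.ReflTransGen.tail (RedStar.app (.lam h1) h2) .beta
  | @absPI Q sg b t t' s s' u u' _ _ _ h1 h2 h3 =>
    refine Relation.ReflTransGen.tail (RedStar.abs (.pair h1 h2) (.inj h3)) ?_
    cases b
    exacts [.absPairInj1, .absPairInj2]
  | @absIP Q sg b t t' s s' u u' _ _ _ h1 h2 h3 =>
    refine Relation.ReflTransGen.tail (RedStar.abs (.inj h3) (.pair h1 h2)) ?_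
    cases b
    exacts [.absInjPair1, .absInjPair2]
  | absN _ _ h1 h2 => exact Relation.ReflTransGen.tail (RedStar.abs (.negi h1) (.negi h2)) .absNeg

/-- Confluence of λPRK. -/
theorem lambdaPRK_confluent (t t1 t2 : Tm)
    (h1 : RedStar t t1) (h2 : RedStar t t2) :
    ∃ t3, RedStar t1 t3 ∧ RedStar t2 t3 := by
  have toPar : ∀ {a b}, RedStar a b → Relation.ReflTransGen Par a b :=
    fun h => h.lift id fun _ _ => Red.par
  have ofPar : ∀ {a b}, Relation.ReflTransGen Par a b → RedStar a b := by
    intro a b h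
    induction h with
    | refl => exact .refl _
    | tail _ h ih => exact Relation.ReflTransGen.trans ih h.redStar
  obtain ⟨t3, h13, h23⟩ := Relation.church_rosser (r := Par) (fun a b c hb hc => by
    obtain ⟨d, hd⟩ := Par.exists_complete a
    exact ⟨d, .single (hd _ hb), .single (hd _ hc)⟩) (toPar h1) (toPar h2)
  exact ⟨t3, ofPar h13, ofPar h23⟩
end
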